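/- arXiv:1103.0800 — 6 statements merged into one kernel-verified Lean document; each statement's English description precedes it below -/
import Mathlib

section
/- Let P, R : ℝ → ℝ, let L > 0, tp ∈ ℝ, and ΔP, ΔR ∈ ℝ with ΔR > 0. Suppose P(t + L) = P(t) + ΔP and R(t + L) = R(t) + ΔR for all t ≥ tp, and suppose P and R are bounded above and below on the interval [tp, tp + L]. Then P(t)/R(t) tends to ΔP/ΔR as t → ∞. -/
open Filter

theorem aux_iter (f : ℝ → ℝ) (L tp D : ℝ) (hL : 0 < L)
    (hper : ∀ t, tp ≤ t → f (t + L) = f t + D) (n : ℕ) :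
    ∀ t, tp ≤ t → f (t + n * L) = f t + n * D := by
  induction n with
  | zero => intro t _; simp
  | succ k ih =>
    intro t ht
    have h0 : (0 : ℝ) ≤ k * L := by positivity
    have h1 := hper (t + k * L) (by linarith)
    rw [ih t ht] at h1
    have h2 : t + ((k + 1 : ℕ) : ℝ) * L = t + k * L + L := by push_cast; ring
    rw [h2, h1]; push_cast; ring

theorem aux_count (L tp : ℝ) (hL : 0 < L) :
    Tendsto (fun t : ℝ => ((⌊(t - tp) / L⌋₊ : ℕ) : ℝ)) atTop atTop := by
  refine tendsto_natCast_atTop_atTop.comp (tendsto_nat_floor_atTop.comp ?_)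
  exact (tendsto_atTop_add_const_right _ (-tp) tendsto_id).atTop_div_const hL

theorem aux_lim (f : ℝ → ℝ) (L tp D : ℝ) (hL : 0 < L)
    (hper : ∀ t, tp ≤ t → f (t + L) = f t + D)
    (ha : BddAbove (f '' Set.Icc tp (tp + L)))
    (hb : BddBelow (f '' Set.Icc tp (tp + L))) :
    Tendsto (fun t : ℝ => f t / ((⌊(t - tp) / L⌋₊ : ℕ) : ℝ)) atTop (nhds D) := by
  obtain ⟨A, hA⟩ := ha
  obtain ⟨B, hB⟩ := hb
  have hn := aux_count L tp hL
  have key : ∀ᶠ t : ℝ in atTop, 0 < ((⌊(t - tp) / L⌋₊ : ℕ) : ℝ) ∧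
      B + ((⌊(t - tp) / L⌋₊ : ℕ) : ℝ) * D ≤ f t ∧
      f t ≤ A + ((⌊(t - tp) / L⌋₊ : ℕ) : ℝ) * D := by
    filter_upwards [eventually_ge_atTop tp, hn.eventually_gt_atTop 0] with t ht hpos
    have hq : 0 ≤ (t - tp) / L := div_nonneg (by linarith) hL.le
    have h1 := Nat.floor_le hq
    have h2 := (Nat.lt_floor_add_one ((t - tp) / L)).le
    rw [le_div_iff₀ hL] at h1
    rw [div_le_iff₀ hL] at h2
    have hs : t - (⌊(t - tp) / L⌋₊ : ℝ) * L ∈ Set.Icc tp (tp + L) :=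
      ⟨by linarith, by linarith⟩
    have h3 := aux_iter f L tp D hL hper ⌊(t - tp) / L⌋₊ _ hs.1
    rw [sub_add_cancel] at h3
    have h4 := hA (Set.mem_image_of_mem f hs)
    have h5 := hB (Set.mem_image_of_mem f hs)
    exact ⟨hpos, by linarith, by linarith⟩
  have lim : ∀ C : ℝ, Tendsto (fun t : ℝ => C / ((⌊(t - tp) / L⌋₊ : ℕ) : ℝ) + D)
      atTop (nhds D) := fun C => by
    simpa using (hn.const_div_atTop C).add_const D
  refine tendsto_of_tendsto_of_tendsto_of_le_of_le' (lim B) (lim A) ?_ ?_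
  · filter_upwards [key] with t ⟨h0, h1, _⟩
    rw [le_div_iff₀ h0, add_mul, div_mul_cancel₀ _ h0.ne']
    linarith
  · filter_upwards [key] with t ⟨h0, _, h1⟩
    rw [div_le_iff₀ h0, add_mul, div_mul_cancel₀ _ h0.ne']
    linarith

/-- Theorem 1 (single penalty/reward pair): if the accumulated penalty `P` and reward `R`
are eventually additively `L`-periodic with increments `ΔP` and `ΔR > 0`, and are bounded
on one period window `[tp, tp + L]`, then the long-run cost `P t / R t` converges to the
per-period cost `ΔP / ΔR`. -/
theorem longRunCost_eq_periodCost
    (P R : ℝ → ℝ) (L tp ΔP ΔR : ℝ) (hL : 0 < L) (hΔR : 0 < ΔR)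
    (hPper : ∀ t, tp ≤ t → P (t + L) = P t + ΔP)
    (hRper : ∀ t, tp ≤ t → R (t + L) = R t + ΔR)
    (hPba : BddAbove (P '' Set.Icc tp (tp + L)))
    (hPbb : BddBelow (P '' Set.Icc tp (tp + L)))
    (hRba : BddAbove (R '' Set.Icc tp (tp + L)))
    (hRbb : BddBelow (R '' Set.Icc tp (tp + L))) :
    Tendsto (fun t => P t / R t) atTop (nhds (ΔP / ΔR)) := by
  have h := (aux_lim P L tp ΔP hL hPper hPba hPbb).div
    (aux_lim R L tp ΔR hL hRper hRba hRbb) hΔR.ne'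
  refine h.congr' ?_
  filter_upwards [(aux_count L tp hL).eventually_gt_atTop 0] with t ht
  exact div_div_div_cancel_right₀ ht.ne' _ _
end

section
/- Let m be a natural number and for each i ∈ Fin m let P_i, R_i : ℝ → ℝ, ΔP_i, ΔR_i ∈ ℝ with ΔR_i > 0, and let L > 0, tp ∈ ℝ. Suppose for each i that P_i(t + L) = P_i(t) + ΔP_i and R_i(t + L) = R_i(t) + ΔR_i for all t ≥ tp, and that P_i and R_i are bounded above and below on [tp, tp + L]. Then the function t ↦ ∑_{i} P_i(t)/R_i(t) tends to ∑_{i} ΔP_i/ΔR_i as t → ∞. -/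
open Filter

/-- An eventually additively periodic function bounded on a window grows at rate `Δ / L`. -/
lemma tendsto_div_of_additively_periodic (f : ℝ → ℝ) (Δ L tp : ℝ) (hL : 0 < L)
    (hper : ∀ t, tp ≤ t → f (t + L) = f t + Δ)
    (hba : BddAbove (f '' Set.Icc tp (tp + L)))
    (hbb : BddBelow (f '' Set.Icc tp (tp + L))) :
    Tendsto (fun t => f t / t) atTop (nhds (Δ / L)) := by
  obtain ⟨A, hA⟩ := hba
  obtain ⟨B, hB⟩ := hbb
  have hiter : ∀ (n : ℕ) (s : ℝ), tp ≤ s → f (s + n * L) = f s + n * Δ := by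
    intro n s hs
    induction n with
    | zero => simp
    | succ k ih =>
      have h1 : tp ≤ s + k * L := by
        have : 0 ≤ (k : ℝ) * L := by positivity
        linarith
      have h2 := hper _ h1
      have h3 : s + ((k + 1 : ℕ) : ℝ) * L = s + k * L + L := by push_cast; ring
      rw [h3, h2, ih]; push_cast; ring
  -- the deviation from linear growth is bounded
  have hbound : ∀ t, tp ≤ t →
      |f t - Δ / L * t| ≤ |A| + |B| + |Δ / L| * (|tp| + L) := by
    intro t ht
    have h0 : 0 ≤ (t - tp) / L := div_nonneg (by linarith) hL.le
    have hn1 := Nat.floor_le h0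
    have hn2 := Nat.lt_floor_add_one ((t - tp) / L)
    generalize ⌊(t - tp) / L⌋₊ = n at hn1 hn2
    rw [le_div_iff₀ hL] at hn1
    rw [div_lt_iff₀ hL] at hn2
    obtain ⟨s, hs⟩ : ∃ s, s = t - n * L := ⟨_, rfl⟩
    have hs1 : tp ≤ s := by linarith
    have hs2 : s ≤ tp + L := by linarith
    have hft : f t = f s + n * Δ := by
      rw [← hiter n s hs1, hs]; congr 1; ring
    have hA' : f s ≤ A := hA ⟨s, ⟨hs1, hs2⟩, rfl⟩
    have hB' : B ≤ f s := hB ⟨s, ⟨hs1, hs2⟩, rfl⟩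
    have hfs : |f s| ≤ |A| + |B| := by
      rw [abs_le]
      constructor
      · linarith [neg_abs_le B, abs_nonneg A]
      · linarith [le_abs_self A, abs_nonneg B]
    have hsabs : |s| ≤ |tp| + L := by
      rw [abs_le]
      constructor
      · linarith [neg_abs_le tp]
      · linarith [le_abs_self tp]
    have heq : f t - Δ / L * t = f s - Δ / L * s := by
      rw [hft, hs]; field_simp; ring
    rw [heq]
    calc |f s - Δ / L * s| ≤ |f s| + |Δ / L * s| := abs_sub _ _
      _ = |f s| + |Δ / L| * |s| := by rw [abs_mul]
      _ ≤ _ := by gcongr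
  generalize |A| + |B| + |Δ / L| * (|tp| + L) = C at hbound
  rw [tendsto_iff_norm_sub_tendsto_zero]
  refine squeeze_zero' (g := fun t => C / t) (Eventually.of_forall fun _ => norm_nonneg _) ?_
    (tendsto_const_nhds.div_atTop tendsto_id)
  filter_upwards [eventually_ge_atTop tp, eventually_gt_atTop 0] with t ht ht0
  have : f t / t - Δ / L = (f t - Δ / L * t) / t := by field_simp
  rw [this, Real.norm_eq_abs, abs_div, abs_of_pos ht0]
  gcongr
  exact hbound t ht

/-- Theorem 1 of the paper: for a trajectory whose accumulated penalties `P i` and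
rewards `R i` are eventually additively `L`-periodic with increments `ΔP i` and
`ΔR i > 0`, and bounded on one period window, the long-run cost
`∑ i, P i t / R i t` converges to the cost `∑ i, ΔP i / ΔR i` of the repetitive segment. -/
theorem longRunCost_sum_eq_periodCost
    (m : ℕ) (P R : Fin m → ℝ → ℝ) (ΔP ΔR : Fin m → ℝ) (L tp : ℝ)
    (hL : 0 < L) (hΔR : ∀ i, 0 < ΔR i)
    (hPper : ∀ i, ∀ t, tp ≤ t → P i (t + L) = P i t + ΔP i)
    (hRper : ∀ i, ∀ t, tp ≤ t → R i (t + L) = R i t + ΔR i)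
    (hPba : ∀ i, BddAbove (P i '' Set.Icc tp (tp + L)))
    (hPbb : ∀ i, BddBelow (P i '' Set.Icc tp (tp + L)))
    (hRba : ∀ i, BddAbove (R i '' Set.Icc tp (tp + L)))
    (hRbb : ∀ i, BddBelow (R i '' Set.Icc tp (tp + L))) :
    Tendsto (fun t => ∑ i, P i t / R i t) atTop (nhds (∑ i, ΔP i / ΔR i)) := by
  refine tendsto_finsetSum _ fun i _ => ?_
  have hP := tendsto_div_of_additively_periodic (P i) (ΔP i) L tp hL (hPper i) (hPba i) (hPbb i)
  have hR := tendsto_div_of_additively_periodic (R i) (ΔR i) L tp hL (hRper i) (hRba i) (hRbb i)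
  have h := hP.div hR (div_pos (hΔR i) hL).ne'
  rw [div_div_div_cancel_right₀ hL.ne'] at h
  refine h.congr' ?_
  filter_upwards [eventually_gt_atTop 0] with t ht
  exact div_div_div_cancel_right₀ ht.ne' _ _
end

section
/- Let E be a real inner product space, ι an index type, x : ι → E and y : ι → ℝ with y i = 1 or y i = −1 for all i. Suppose there exist θ* ∈ E with ‖θ*‖ = 1 and γ > 0 such that y i · ⟪θ*, x i⟫ ≥ γ for all i, and there is ρ > 0 with ‖x i‖ ≤ ρ for all i. Let T be a natural number and θ : ℕ → E satisfy θ 0 = 0 and, for each t < T, there is an index i_t with y(i_t) · ⟪θ t, x(i_t)⟫ ≤ 0 and θ(t+1) = θ t + y(i_t) • x(i_t). Then T ≤ ρ²/γ². -/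
open scoped RealInnerProductSpace

/-- Novikoff's perceptron convergence bound: if labeled samples `(x i, y i)` are linearly
separable with margin `γ` by a unit vector `θstar` and all samples have norm at most `ρ`,
then the perceptron algorithm (starting from `0` and updating `θ ← θ + y i • x i` on a
misclassified sample) performs at most `ρ²/γ²` update steps. -/
theorem perceptron_convergence
    {E : Type*} [NormedAddCommGroup E] [InnerProductSpace ℝ E]
    {ι : Type*} (x : ι → E) (y : ι → ℝ)
    (hy : ∀ i, y i = 1 ∨ y i = -1)
    (θstar : E) (hθstar : ‖θstar‖ = 1)
    (γ : ℝ) (hγ : 0 < γ) (hmargin : ∀ i, γ ≤ y i * ⟪θstar, x i⟫)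
    (ρ : ℝ) (hρ : 0 < ρ) (hnorm : ∀ i, ‖x i‖ ≤ ρ)
    (T : ℕ) (θ : ℕ → E) (hθ0 : θ 0 = 0)
    (hstep : ∀ t < T, ∃ i, y i * ⟪θ t, x i⟫ ≤ 0 ∧ θ (t + 1) = θ t + y i • x i) :
    (T : ℝ) ≤ ρ ^ 2 / γ ^ 2 := by
  have key : ∀ t : ℕ, t ≤ T → (t : ℝ) * γ ≤ ⟪θstar, θ t⟫ ∧ ‖θ t‖ ^ 2 ≤ t * ρ ^ 2 := by
    intro t
    induction t with
    | zero => intro _; simp [hθ0]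
    | succ t ih =>
      intro ht
      obtain ⟨h1, h2⟩ := ih (by omega)
      obtain ⟨i, hi, he⟩ := hstep t (by omega)
      have hm := hmargin i
      have hn : ‖x i‖ ^ 2 ≤ ρ ^ 2 := pow_le_pow_left₀ (norm_nonneg _) (hnorm i) 2
      have hyx : ‖y i • x i‖ = ‖x i‖ := by
        rcases hy i with h | h <;> simp [h]
      rw [he, inner_add_right, inner_smul_right, norm_add_sq_real, inner_smul_right, hyx]
      push_cast
      constructor <;> linarith
  obtain ⟨h1, h2⟩ := key T le_rfl
  have h3 : ⟪θstar, θ T⟫ ≤ ‖θ T‖ := by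
    simpa [hθstar] using real_inner_le_norm θstar (θ T)
  have h4 : ((T : ℝ) * γ) ^ 2 ≤ T * ρ ^ 2 :=
    (pow_le_pow_left₀ (by positivity) (h1.trans h3) 2).trans h2
  rw [le_div_iff₀ (by positivity)]
  rcases Nat.eq_zero_or_pos T with h | h
  · subst h
    simp only [Nat.cast_zero, zero_mul]
    positivity
  · have hT : (0 : ℝ) < T := by exact_mod_cast h
    refine le_of_mul_le_mul_left ?_ hT
    calc (T : ℝ) * (T * γ ^ 2) = (T * γ) ^ 2 := by ring
      _ ≤ _ := h4
end

section
/- Let n be a natural number and let p : Fin (n+1) → EuclideanSpace ℝ (Fin n) be an affinely independent family of points. Then for every subset S of Fin (n+1) there exist w ∈ EuclideanSpace ℝ (Fin n) and b ∈ ℝ such that for all i, ⟪w, p i⟫ + b ≥ 0 if and only if i ∈ S. -/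
open scoped RealInnerProductSpace

/-- VC-dimension lower bound for halfspaces in `ℝⁿ`: any affinely independent family of
`n + 1` points is shattered by halfspaces `{x | ⟪w, x⟫ + b ≥ 0}`. -/
theorem halfspaces_shatter_affineIndependent
    (n : ℕ) (p : Fin (n + 1) → EuclideanSpace ℝ (Fin n))
    (hp : AffineIndependent ℝ p) :
    ∀ S : Set (Fin (n + 1)), ∃ (w : EuclideanSpace ℝ (Fin n)) (b : ℝ),
      ∀ i, 0 ≤ ⟪w, p i⟫ + b ↔ i ∈ S := by
  classical
  intro S
  have htop : affineSpan ℝ (Set.range p) = ⊤ := by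
    rw [hp.affineSpan_eq_top_iff_card_eq_finrank_add_one]
    simp
  let B : AffineBasis (Fin (n + 1)) ℝ (EuclideanSpace ℝ (Fin n)) := ⟨p, hp, htop⟩
  let c : Fin (n + 1) → ℝ := fun i => if i ∈ S then 1 else -1
  let f : EuclideanSpace ℝ (Fin n) →ᵃ[ℝ] ℝ :=
    (Fintype.linearCombination ℝ c).toAffineMap.comp B.coords
  have hf : ∀ i, f (p i) = c i := by
    intro i
    have h : ∀ j, B.coord j (p i) = if j = i then 1 else 0 := fun j => B.coord_apply j i
    simp [f, Fintype.linearCombination_apply, AffineBasis.coords_apply, h]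
  refine ⟨(InnerProductSpace.toDual ℝ _).symm (LinearMap.toContinuousLinearMap f.linear),
    f 0, fun i => ?_⟩
  have h1 : f.linear (p i) + f 0 = c i := by
    rw [← hf i]
    simpa using (f.map_vadd 0 (p i)).symm
  rw [InnerProductSpace.toDual_symm_apply, LinearMap.coe_toContinuousLinearMap', h1]
  by_cases hi : i ∈ S <;> simp [c, hi]
end

section
/- Let n be a natural number and let p : Fin (n+2) → EuclideanSpace ℝ (Fin n) be any family of n + 2 points. Then there exists a subset S of Fin (n+2) such that there are no w ∈ EuclideanSpace ℝ (Fin n) and b ∈ ℝ with the property that for all i, ⟪w, p i⟫ + b ≥ 0 if and only if i ∈ S. -/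
open scoped RealInnerProductSpace

/-- VC-dimension upper bound for halfspaces in `ℝⁿ`: no family of `n + 2` points can be
shattered by halfspaces `{x | ⟪w, x⟫ + b ≥ 0}`. -/
theorem halfspaces_not_shatter
    (n : ℕ) (p : Fin (n + 2) → EuclideanSpace ℝ (Fin n)) :
    ∃ S : Set (Fin (n + 2)), ¬ ∃ (w : EuclideanSpace ℝ (Fin n)) (b : ℝ),
      ∀ i, 0 ≤ ⟪w, p i⟫ + b ↔ i ∈ S := by
  have hdep : ¬ AffineIndependent ℝ p := by
    intro h
    have h1 := h.card_le_finrank_succ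
    have h2 := Submodule.finrank_le (vectorSpan ℝ (Set.range p))
    rw [finrank_euclideanSpace_fin] at h2
    rw [Fintype.card_fin] at h1
    omega
  obtain ⟨S, x, hx1, hx2⟩ := Convex.radon_partition hdep
  refine ⟨S, ?_⟩
  rintro ⟨w, b, h⟩
  have hlin : IsLinearMap ℝ (fun y : EuclideanSpace ℝ (Fin n) => ⟪w, y⟫) :=
    ⟨fun y z => inner_add_right w y z, fun c y => real_inner_smul_right w y c⟩
  have k1 : x ∈ {y : EuclideanSpace ℝ (Fin n) | -b ≤ ⟪w, y⟫} := by
    refine convexHull_min ?_ (convex_halfSpace_ge hlin (-b)) hx1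
    rintro _ ⟨i, hi, rfl⟩
    have := (h i).2 hi
    show -b ≤ ⟪w, p i⟫
    linarith
  have k2 : x ∈ {y : EuclideanSpace ℝ (Fin n) | ⟪w, y⟫ < -b} := by
    refine convexHull_min ?_ (convex_halfSpace_lt hlin (-b)) hx2
    rintro _ ⟨i, hi, rfl⟩
    have := mt (h i).1 hi
    show ⟪w, p i⟫ < -b
    linarith
  rw [Set.mem_setOf_eq] at k1 k2
  linarith
end

section
/- Let p₁, p₂, p₃ ∈ EuclideanSpace ℝ (Fin 2) be three points that are not collinear (i.e., the family p : Fin 3 → ℝ² is affinely independent). Then for every subset S of Fin 3 there exist w ∈ EuclideanSpace ℝ (Fin 2) and b ∈ ℝ such that for all i, ⟪w, p i⟫ + b ≥ 0 if and only if i ∈ S. -/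
open scoped RealInnerProductSpace

/-- Any 3 non-collinear (affinely independent) points in the plane are shattered by
halfplanes `{x | ⟪w, x⟫ + b ≥ 0}`. -/
theorem three_noncollinear_points_shattered_by_halfplanes
    (p : Fin 3 → EuclideanSpace ℝ (Fin 2)) (hp : AffineIndependent ℝ p) :
    ∀ S : Set (Fin 3), ∃ (w : EuclideanSpace ℝ (Fin 2)) (b : ℝ),
      ∀ i, 0 ≤ ⟪w, p i⟫ + b ↔ i ∈ S := by
  classical
  intro S
  let t : Fin 3 → ℝ := fun i => if i ∈ S then 1 else -1
  have hv := (affineIndependent_iff_linearIndependent_vsub ℝ p 0).1 hp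
  obtain ⟨g, hg⟩ := LinearMap.exists_leftInverse_of_injective _ (LinearMap.ker_eq_bot.2 hv)
  let f : EuclideanSpace ℝ (Fin 2) →ₗ[ℝ] ℝ :=
    (Finsupp.linearCombination ℝ (fun i : {x : Fin 3 // x ≠ 0} => t i - t 0)) ∘ₗ g
  have hf : ∀ i, f (p i - p 0) = t i - t 0 := by
    intro i
    by_cases hi : i = 0
    · subst hi; simp
    · have := LinearMap.congr_fun hg (Finsupp.single ⟨i, hi⟩ 1)
      simp only [LinearMap.comp_apply, Finsupp.linearCombination_single, one_smul,
        LinearMap.id_apply, vsub_eq_sub] at this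
      simp only [f, LinearMap.comp_apply, this, Finsupp.linearCombination_single, one_smul]
  refine ⟨(InnerProductSpace.toDual ℝ _).symm (LinearMap.toContinuousLinearMap f),
    t 0 - f (p 0), fun i => ?_⟩
  have h := hf i
  rw [map_sub] at h
  rw [InnerProductSpace.toDual_symm_apply, LinearMap.coe_toContinuousLinearMap',
    show f (p i) + (t 0 - f (p 0)) = t i by linarith]
  by_cases hi : i ∈ S <;> simp [t, hi]
end
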